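/- Let G be a connected labeled Hamiltonian graph on vertex set [n], i.e., the cycle C_n (with edges {1,n} and {i,i+1} for i=1,...,n-1) is a subgraph of G. Then the only minimal prime ideal of the Hankel edge ideal I_G is the ideal I_X of 2-minors of the 2×n Hankel matrix; in particular, height I_G = n-1. -/

import Mathlib

open MvPolynomial

/-- The Hankel binomial `g_{ij} = x_i x_{j+1} - x_j x_{i+1}` (0-indexed vertices). -/
noncomputable def hg (n : ℕ) (K : Type*) [Field K] (i j : Fin n) :
    MvPolynomial (Fin (n + 1)) K :=
  X i.castSucc * X j.succ - X j.castSucc * X i.succ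

/-- The generating set of the Hankel edge ideal of a graph `G` on `[n]`. -/
noncomputable def hgenSet (n : ℕ) (K : Type*) [Field K] (G : SimpleGraph (Fin n)) :
    Set (MvPolynomial (Fin (n + 1)) K) :=
  { f | ∃ i j : Fin n, i < j ∧ G.Adj i j ∧ f = hg n K i j }

/-- The Hankel edge ideal `I_G`. -/
noncomputable def hankelIdeal (n : ℕ) (K : Type*) [Field K] (G : SimpleGraph (Fin n)) :
    Ideal (MvPolynomial (Fin (n + 1)) K) :=
  Ideal.span (hgenSet n K G)

/-- `I_X`, the ideal of 2-minors of the 2×n Hankel matrix, i.e. `I_{K_n}`. -/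
noncomputable def IX (n : ℕ) (K : Type*) [Field K] :
    Ideal (MvPolynomial (Fin (n + 1)) K) :=
  hankelIdeal n K ⊤

/-- The height of an ideal: the infimum of the heights of primes containing it. -/
noncomputable def ht {R : Type*} [CommRing R] (I : Ideal R) : ℕ∞ :=
  ⨅ (p : PrimeSpectrum R) (_ : I ≤ p.asIdeal), Order.height p

/-- The minimal number of generators of an ideal. -/
noncomputable def mu {R : Type*} [CommRing R] (I : Ideal R) : ℕ∞ :=
  ⨅ (s : Finset R) (_ : Ideal.span (s : Set R) = I), (s.card : ℕ∞)

/-- The arithmetical rank of an ideal. -/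
noncomputable def ara {R : Type*} [CommRing R] (I : Ideal R) : ℕ∞ :=
  ⨅ (s : Finset R) (_ : (Ideal.span (s : Set R)).radical = I.radical), (s.card : ℕ∞)

/-- The labeled path `L_n` with edges `{i, i+1}` (0-indexed). -/
def pathG (n : ℕ) : SimpleGraph (Fin n) :=
  SimpleGraph.fromRel (fun i j => (i : ℕ) + 1 = (j : ℕ))

/-- The labeled cycle `C_n` with edges `{i, i+1}` and `{0, n-1}` (0-indexed). -/
def cycleG (n : ℕ) : SimpleGraph (Fin n) :=
  SimpleGraph.fromRel (fun i j =>
    (i : ℕ) + 1 = (j : ℕ) ∨ ((i : ℕ) = 0 ∧ (j : ℕ) = n - 1))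

/-- The monomial prime ideal generated by the variables with index in `[lo, hi]` (0-indexed). -/
noncomputable def Pvars (n : ℕ) (K : Type*) [Field K] (lo hi : ℕ) :
    Ideal (MvPolynomial (Fin (n + 1)) K) :=
  Ideal.span { f | ∃ i : Fin (n + 1), lo ≤ (i : ℕ) ∧ (i : ℕ) ≤ hi ∧ f = X i }

/-!
Let `y` be a zero of `I_G` in a domain, for `G` containing the cycle. If `y₀ y₁ ≠ 0`, the path
relations force `yᵢ₊₁ / yᵢ = y₁ / y₀`, so `y` is a geometric sequence and all 2-minors vanish. If
`y₁ = 0`, the path relations kill `y₁, …, yₙ₋₁` and the closing edge `{0, n - 1}` gives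
`y₀ yₙ = yₙ₋₁ y₁ = 0`; again all 2-minors vanish. Hence every prime over `I_G` contains `I_X`.

That `I_X` is prime follows by identifying it with the kernel of `xᵢ ↦ s tⁱ`: modulo `I_X`, a
monomial depends only on its degree and on the sum of its indices. Imposing `xᵢ = s tⁱ` only for
`i ≤ k` gives a chain of primes which bounds the height of `I_X` from below, while `I_X`, being
minimal over the ideal of the path, has height at most `n - 1` by Krull's height theorem.
-/

lemma ht_eq_height {R : Type*} [CommRing R] (I : Ideal R) : ht I = I.height := by
  simp only [ht, ← PrimeSpectrum.height_eq_orderHeight]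
  apply le_antisymm
  · rw [Ideal.height_eq_inf_minimalPrimes]
    exact le_iInf₂ fun P hP => iInf₂_le (⟨P, hP.isPrime⟩ : PrimeSpectrum R) hP.1.2
  · exact le_iInf₂ fun P hP => Ideal.height_mono hP

/-- In other words, `ker φ` is spanned by the differences `b i - b j` with `e i = e j`. -/
lemma ker_le_ker_of_factorsThrough {R M N P ι κ : Type*} [Semiring R]
    [AddCommMonoid M] [AddCommMonoid N] [AddCommMonoid P] [Module R M] [Module R N] [Module R P]
    (b : Module.Basis ι R M) (c : Module.Basis κ R N) {φ : M →ₗ[R] N} {e : ι → κ}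
    (hφ : ∀ i, φ (b i) = c (e i)) {ψ : M →ₗ[R] P}
    (hψ : Function.FactorsThrough (fun i => ψ (b i)) e) :
    LinearMap.ker φ ≤ LinearMap.ker ψ := by
  let lift : N →ₗ[R] P := c.constr ℕ (Function.extend e (fun i => ψ (b i)) 0)
  have hlift : lift ∘ₗ φ = ψ := b.ext fun i => by
    rw [LinearMap.comp_apply, hφ, Module.Basis.constr_basis, hψ.extend_apply]
  exact hlift ▸ LinearMap.ker_le_ker_comp φ lift

lemma monomial_one_eq_prod_X {σ R : Type*} [CommSemiring R] (m : σ →₀ ℕ) :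
    (monomial m 1 : MvPolynomial σ R) = (m.toMultiset.map X).prod := by
  rw [Finsupp.toMultiset_map, Finsupp.prod_toMultiset,
    Finsupp.prod_mapDomain_index (fun _ => pow_zero _) (fun _ _ _ => pow_add _ _ _),
    monomial_eq, C_1, one_mul]

lemma prod_map_mul_pow {M ι : Type*} [CommMonoid M] (a b : M) (f : ι → ℕ) (s : Multiset ι) :
    (s.map fun i => a * b ^ f i).prod = a ^ s.card * b ^ (s.map f).sum := by
  rw [Multiset.prod_map_mul, Multiset.map_const', Multiset.prod_replicate]
  congr 1
  induction s using Multiset.induction_on with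
  | empty => simp
  | cons i s ih => simp [ih, pow_add]

section HankelZero

variable {n : ℕ} {A : Type*}

/-- The terms `y 0, …, y n` of a sequence form a zero of the Hankel edge ideal `I_G`. Indexing by
`ℕ` avoids casts between `Fin n` and `Fin (n + 1)`; the terms beyond `y n` play no role. -/
def IsHankelZero [Mul A] (G : SimpleGraph (Fin n)) (y : ℕ → A) : Prop :=
  ∀ ⦃i j : Fin n⦄, G.Adj i j → y i * y (j + 1) = y j * y (i + 1)

namespace IsHankelZero

lemma mono [Mul A] {G H : SimpleGraph (Fin n)} {y : ℕ → A} (h : IsHankelZero H y) (hGH : G ≤ H) :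
    IsHankelZero G y :=
  fun _ _ hij => h (hGH hij)

lemma minor_eq [Mul A] {y : ℕ → A} (h : IsHankelZero (⊤ : SimpleGraph (Fin n)) y) {i j : ℕ}
    (hi : i < n) (hj : j < n) : y i * y (j + 1) = y j * y (i + 1) := by
  obtain rfl | hij := eq_or_ne i j
  · rfl
  · exact h (i := ⟨i, hi⟩) (j := ⟨j, hj⟩) (by simpa using hij)

lemma sq_eq [Mul A] {y : ℕ → A} (h : IsHankelZero (pathG n) y) {i : ℕ} (hi : i + 1 < n) :
    y i * y (i + 2) = y (i + 1) * y (i + 1) :=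
  h (i := ⟨i, by lia⟩) (j := ⟨i + 1, hi⟩) (by simp [pathG])

end IsHankelZero

lemma pathG_le_cycleG (n : ℕ) : pathG n ≤ cycleG n := by
  intro i j
  simp only [pathG, cycleG, SimpleGraph.fromRel_adj]
  tauto

end HankelZero

section NoZeroDivisors

namespace IsHankelZero

variable {n : ℕ} {A : Type*} [CommRing A] [NoZeroDivisors A] {y : ℕ → A}

lemma geometric_of_pathG (h : IsHankelZero (pathG n) y) (h0 : y 0 ≠ 0) (h1 : y 1 ≠ 0) {i : ℕ}
    (hi : i < n) : y i ≠ 0 ∧ y 0 * y (i + 1) = y 1 * y i := by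
  induction i with
  | zero => exact ⟨h0, mul_comm _ _⟩
  | succ i ih =>
    obtain ⟨hyi, ratio⟩ := ih (by lia)
    refine ⟨fun hz => mul_ne_zero h1 hyi (by rw [← ratio, hz, mul_zero]), ?_⟩
    apply mul_left_cancel₀ hyi
    linear_combination y 0 * h.sq_eq hi + y (i + 1) * ratio

lemma top_of_pathG (h : IsHankelZero (pathG n) y) (h0 : y 0 ≠ 0) (h1 : y 1 ≠ 0) :
    IsHankelZero (⊤ : SimpleGraph (Fin n)) y := by
  intro i j _
  have ratio (i : Fin n) := (h.geometric_of_pathG h0 h1 i.isLt).2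
  apply mul_left_cancel₀ h0
  linear_combination y i * ratio j - y j * ratio i

lemma eq_zero_of_pathG (h : IsHankelZero (pathG n) y) (h1 : y 1 = 0) {i : ℕ} (hi₀ : 0 < i)
    (hi : i < n) : y i = 0 := by
  induction i, hi₀ using Nat.le_induction with
  | base => exact h1
  | succ i _ ih => simpa [ih (by lia)] using (h.sq_eq hi).symm

lemma mul_last_eq_zero_of_cycleG (h : IsHankelZero (cycleG n) y) (h1 : y 1 = 0) (hn : 1 < n) :
    y 0 * y n = 0 := by
  have closing := h (i := ⟨0, by lia⟩) (j := ⟨n - 1, by lia⟩)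
    (by simp [cycleG, Fin.ext_iff]; lia)
  simpa [h1, Nat.sub_add_cancel hn.le] using closing

lemma top_of_cycleG (h : IsHankelZero (cycleG n) y) :
    IsHankelZero (⊤ : SimpleGraph (Fin n)) y := by
  have hpath := h.mono (pathG_le_cycleG n)
  by_cases h1 : y 1 = 0
  · suffices minor_eq_zero : ∀ i j : Fin n, i ≠ j → y i * y (j + 1) = 0 from
      fun i j hij => by rw [minor_eq_zero i j hij.ne, minor_eq_zero j i hij.ne']
    intro i j hij
    rcases Nat.eq_zero_or_pos i with hi | hi
    · rcases (Nat.succ_le_of_lt j.isLt).lt_or_eq with hj | hj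
      · rw [hpath.eq_zero_of_pathG h1 (Nat.succ_pos _) hj, mul_zero]
      · rw [hi, ← Nat.succ_eq_add_one, hj, h.mul_last_eq_zero_of_cycleG h1 (by lia)]
    · rw [hpath.eq_zero_of_pathG h1 hi i.isLt, zero_mul]
  · by_cases h0 : y 0 = 0
    · intro i j hij
      have hn : 1 < n := by have := hij.ne; lia
      exact absurd (by simpa [h0] using (hpath.sq_eq hn).symm) h1
    · exact hpath.top_of_pathG h0 h1

end IsHankelZero

end NoZeroDivisors

section NormalForm

variable {n : ℕ} {A : Type*} [CommMonoid A] {y : ℕ → A}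

/-- The greedy product of `d` of the elements `y 0, …, y n` with index sum `w`, of the form
`y n ^ q * y r * y 0 ^ p`. It has index sum `w` only if `w ≤ n * d`. -/
def hankelNormalForm (n : ℕ) (y : ℕ → A) : ℕ → ℕ → A
  | 0, _ => 1
  | d + 1, w => y (min w n) * hankelNormalForm n y d (w - n)

namespace IsHankelZero

lemma shift_eq (h : IsHankelZero (⊤ : SimpleGraph (Fin n)) y) (k : ℕ) {a b : ℕ}
    (ha : a + k ≤ n) (hb : b + k ≤ n) : y a * y (b + k) = y (a + k) * y b := by
  induction k generalizing a with
  | zero => rfl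
  | succ k ih =>
    calc y a * y (b + k + 1) = y (a + 1) * y (b + k) := by
          rw [h.minor_eq (by lia) (by lia), mul_comm]
      _ = y (a + (k + 1)) * y b := by
          rw [ih (by lia) (by lia), add_assoc, add_comm 1]

lemma mul_eq_mul (h : IsHankelZero (⊤ : SimpleGraph (Fin n)) y) {a b c d : ℕ} (ha : a ≤ n)
    (hb : b ≤ n) (hc : c ≤ n) (hd : d ≤ n) (hsum : a + b = c + d) : y a * y b = y c * y d := by
  rcases le_total a c with hac | hac
  · obtain ⟨k, rfl⟩ := exists_add_of_le hac
    obtain rfl : b = d + k := by lia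
    exact h.shift_eq k hc hb
  · obtain ⟨k, rfl⟩ := exists_add_of_le hac
    obtain rfl : d = b + k := by lia
    exact (h.shift_eq k ha hd).symm

lemma mul_normalForm (h : IsHankelZero (⊤ : SimpleGraph (Fin n)) y) {i : ℕ} (hi : i ≤ n)
    {d w : ℕ} (hw : w ≤ n * d) :
    y i * hankelNormalForm n y d w = hankelNormalForm n y (d + 1) (i + w) := by
  induction d generalizing i w with
  | zero =>
    obtain rfl : w = 0 := by lia
    simp only [hankelNormalForm, add_zero, min_eq_left hi]
  | succ d ih =>
    have hw' : w - n ≤ n * d := by rw [mul_add] at hw; lia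
    obtain ⟨k, hk, hexch, hsum⟩ : ∃ k ≤ n,
        y i * y (min w n) = y (min (i + w) n) * y k ∧ k + (w - n) = i + w - n :=
      ⟨i + min w n - min (i + w) n, by lia,
        h.mul_eq_mul hi (by lia) (by lia) (by lia) (by lia), by lia⟩
    calc y i * (y (min w n) * hankelNormalForm n y d (w - n))
        = y (min (i + w) n) * (y k * hankelNormalForm n y d (w - n)) := by
          rw [← mul_assoc, hexch, mul_assoc]
      _ = y (min (i + w) n) * hankelNormalForm n y (d + 1) (i + w - n) := by
          rw [ih hk hw', hsum]

lemma prod_eq_normalForm (h : IsHankelZero (⊤ : SimpleGraph (Fin n)) y)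
    (s : Multiset (Fin (n + 1))) :
    (s.map fun i : Fin (n + 1) => y i).prod = hankelNormalForm n y s.card (s.map Fin.val).sum := by
  induction s using Multiset.induction_on with
  | empty => simp [hankelNormalForm]
  | cons i s ih =>
    have hsum : (s.map Fin.val).sum ≤ n * s.card := by
      simpa [mul_comm] using Multiset.sum_le_card_nsmul (s.map Fin.val) n (by simp; lia)
    simpa only [Multiset.map_cons, Multiset.prod_cons, Multiset.sum_cons, Multiset.card_cons, ih]
      using h.mul_normalForm (Fin.is_le i) hsum

end IsHankelZero

end NormalForm

section Ideals

variable {n : ℕ} {K A : Type*} [Field K]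

/-- The images of the variables under a ring homomorphism, as a sequence indexed by `ℕ`.
Indices are read modulo `n + 1`, so only the terms `0, …, n` are meaningful. -/
noncomputable def varSeq {R : Type*} [CommSemiring R] [CommSemiring A]
    (φ : MvPolynomial (Fin (n + 1)) R →+* A) (i : ℕ) : A :=
  φ (X (Fin.ofNat (n + 1) i))

lemma varSeq_fin {R : Type*} [CommSemiring R] [CommSemiring A]
    (φ : MvPolynomial (Fin (n + 1)) R →+* A) (i : Fin (n + 1)) : varSeq φ i = φ (X i) := by
  rw [varSeq, Fin.ofNat_val_eq_self]

lemma map_hg [CommRing A] (φ : MvPolynomial (Fin (n + 1)) K →+* A) (i j : Fin n) :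
    φ (hg n K i j) = varSeq φ i * varSeq φ (j + 1) - varSeq φ j * varSeq φ (i + 1) := by
  simp only [hg, map_sub, map_mul, ← varSeq_fin, Fin.val_castSucc, Fin.val_succ]

lemma hankelIdeal_le_ker_iff [CommRing A] {G : SimpleGraph (Fin n)}
    {φ : MvPolynomial (Fin (n + 1)) K →+* A} :
    hankelIdeal n K G ≤ RingHom.ker φ ↔ IsHankelZero G (varSeq φ) := by
  have hedge (i j : Fin n) : hg n K i j ∈ RingHom.ker φ ↔
      varSeq φ i * varSeq φ (j + 1) = varSeq φ j * varSeq φ (i + 1) := by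
    rw [RingHom.mem_ker, map_hg, sub_eq_zero]
  rw [hankelIdeal, Ideal.span_le]
  constructor
  · intro h i j hij
    rcases lt_or_gt_of_ne hij.ne with hlt | hlt
    · exact (hedge i j).1 (h ⟨i, j, hlt, hij, rfl⟩)
    · exact ((hedge j i).1 (h ⟨j, i, hlt, hij.symm, rfl⟩)).symm
  · rintro h f ⟨i, j, -, hij, rfl⟩
    exact (hedge i j).2 (h hij)

lemma hankelIdeal_le_iff {G : SimpleGraph (Fin n)} {I : Ideal (MvPolynomial (Fin (n + 1)) K)} :
    hankelIdeal n K G ≤ I ↔ IsHankelZero G (varSeq (Ideal.Quotient.mk I)) := by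
  rw [← hankelIdeal_le_ker_iff, Ideal.mk_ker]

lemma hankelIdeal_mono {G H : SimpleGraph (Fin n)} (h : G ≤ H) :
    hankelIdeal n K G ≤ hankelIdeal n K H :=
  hankelIdeal_le_iff.2 ((hankelIdeal_le_iff.1 le_rfl).mono h)

lemma IX_le_of_hankelIdeal_cycleG_le {P : Ideal (MvPolynomial (Fin (n + 1)) K)} [P.IsPrime]
    (h : hankelIdeal n K (cycleG n) ≤ P) : IX n K ≤ P :=
  hankelIdeal_le_iff.2 (hankelIdeal_le_iff.1 h).top_of_cycleG

end Ideals

section Parametrization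

variable (n : ℕ) (R : Type*) [CommRing R]

/-- The partial parametrization `xᵢ ↦ s tⁱ` for `i ≤ k` and `xᵢ ↦ xᵢ` for `i > k`, where `s` and
`t` are the variables `X 0` and `X 1` of the target. For `k ≥ n` it parametrizes the affine cone
over the rational normal curve. -/
noncomputable def partialParam (k : ℕ) :
    MvPolynomial (Fin (n + 1)) R →ₐ[R] MvPolynomial ℕ R :=
  aeval fun i => if (i : ℕ) ≤ k then X 0 * X 1 ^ (i : ℕ) else X (i : ℕ)

variable {n R}

lemma partialParam_X_of_le {k : ℕ} {i : Fin (n + 1)} (hi : (i : ℕ) ≤ k) :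
    partialParam n R k (X i) = X 0 * X 1 ^ (i : ℕ) := by
  rw [partialParam, aeval_X, if_pos hi]

lemma partialParam_X_of_lt {k : ℕ} {i : Fin (n + 1)} (hi : k < i) :
    partialParam n R k (X i) = X (i : ℕ) := by
  rw [partialParam, aeval_X, if_neg hi.not_ge]

lemma varSeq_partialParam {i : ℕ} (hi : i ≤ n) :
    varSeq (partialParam n R n).toRingHom i = X 0 * X 1 ^ i :=
  (varSeq_fin _ ⟨i, by lia⟩).trans (partialParam_X_of_le hi)

lemma isHankelZero_partialParam :
    IsHankelZero (⊤ : SimpleGraph (Fin n)) (varSeq (partialParam n R n).toRingHom) := by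
  intro i j _
  rw [varSeq_partialParam (by lia), varSeq_partialParam (by lia), varSeq_partialParam (by lia),
    varSeq_partialParam (by lia)]
  ring

lemma partialParam_monomial_one (m : Fin (n + 1) →₀ ℕ) :
    partialParam n R n (monomial m 1) =
      monomial (Finsupp.single 0 m.toMultiset.card +
        Finsupp.single 1 (m.toMultiset.map Fin.val).sum) 1 := by
  rw [monomial_one_eq_prod_X, map_multiset_prod, Multiset.map_map]
  simp only [Function.comp_def, partialParam_X_of_le (Fin.is_le _)]
  rw [prod_map_mul_pow, X_pow_eq_monomial, X_pow_eq_monomial, monomial_mul, one_mul]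

instance isPrime_ker_partialParam [IsDomain R] (k : ℕ) :
    (RingHom.ker (partialParam n R k)).IsPrime :=
  RingHom.ker_isPrime _

lemma ker_partialParam_le_succ {k : ℕ} (hk : 1 ≤ k) :
    RingHom.ker (partialParam n R k) ≤ RingHom.ker (partialParam n R (k + 1)) := by
  let subst : MvPolynomial ℕ R →ₐ[R] MvPolynomial ℕ R :=
    aeval (Function.update X (k + 1) (X 0 * X 1 ^ (k + 1)))
  have subst_X {i : ℕ} (hi : i ≠ k + 1) : subst (X i) = X i := by
    rw [aeval_X, Function.update_of_ne hi]
  have hcomp : subst.comp (partialParam n R k) = partialParam n R (k + 1) := by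
    ext1 i
    rw [AlgHom.comp_apply]
    rcases lt_trichotomy (i : ℕ) (k + 1) with hi | hi | hi
    · rw [partialParam_X_of_le (by lia), partialParam_X_of_le hi.le, map_mul, map_pow,
        subst_X (by lia), subst_X (by lia)]
    · rw [partialParam_X_of_lt (by lia), partialParam_X_of_le hi.le, hi, aeval_X,
        Function.update_self]
    · rw [partialParam_X_of_lt (by lia), partialParam_X_of_lt hi, subst_X hi.ne']
  intro f hf
  rw [RingHom.mem_ker] at hf ⊢
  rw [← hcomp, AlgHom.comp_apply, hf, map_zero]

lemma ker_partialParam_lt_succ [Nontrivial R] {k : ℕ} (hk : 1 ≤ k) (hkn : k + 1 ≤ n) :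
    RingHom.ker (partialParam n R k) < RingHom.ker (partialParam n R (k + 1)) := by
  let minor : MvPolynomial (Fin (n + 1)) R :=
    X ⟨0, by lia⟩ * X ⟨k + 1, by lia⟩ - X ⟨1, by lia⟩ * X ⟨k, by lia⟩
  have minor_eq : partialParam n R (k + 1) minor = 0 := by
    simp only [minor, map_sub, map_mul]
    rw [partialParam_X_of_le (by lia), partialParam_X_of_le (by lia),
      partialParam_X_of_le (by lia), partialParam_X_of_le (by lia)]
    ring
  have minor_ne : partialParam n R k minor ≠ 0 := by
    intro hzero
    have heval := congrArg (eval fun i : ℕ => if i ≤ 1 then (1 : R) else 0) hzero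
    simp only [minor, map_sub, map_mul] at heval
    rw [partialParam_X_of_le (by lia), partialParam_X_of_lt (by lia),
      partialParam_X_of_le (by lia), partialParam_X_of_le (by lia)] at heval
    simp [show k ≠ 0 by lia] at heval
  exact SetLike.lt_iff_le_and_exists.2 ⟨ker_partialParam_le_succ hk, minor, minor_eq, minor_ne⟩

lemma le_height_ker_partialParam [IsDomain R] {k : ℕ} (hk : k + 1 ≤ n) :
    k ≤ (RingHom.ker (partialParam n R (k + 1))).height := by
  induction k with
  | zero => simp
  | succ k ih =>
    calc ((k + 1 : ℕ) : ℕ∞) ≤ (RingHom.ker (partialParam n R (k + 1))).height + 1 := by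
          push_cast
          gcongr
          exact ih (by lia)
      _ ≤ (RingHom.ker (partialParam n R (k + 1 + 1))).height :=
          Ideal.height_add_one_le_of_lt_of_isPrime (ker_partialParam_lt_succ (by lia) hk)

end Parametrization

section Height

variable {n : ℕ} {K : Type*} [Field K]

lemma ker_partialParam_le_IX : RingHom.ker (partialParam n K n) ≤ IX n K := by
  have hzero := hankelIdeal_le_iff.1 (le_refl (IX n K))
  have hclass (m : Fin (n + 1) →₀ ℕ) : Ideal.Quotient.mk (IX n K) (monomial m 1) =
      hankelNormalForm n (varSeq (Ideal.Quotient.mk (IX n K))) m.toMultiset.card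
        (m.toMultiset.map Fin.val).sum := by
    rw [← hzero.prod_eq_normalForm, monomial_one_eq_prod_X, map_multiset_prod, Multiset.map_map]
    simp only [varSeq_fin, Function.comp_def]
  have hker := ker_le_ker_of_factorsThrough (basisMonomials _ K) (basisMonomials _ K)
    (φ := (partialParam n K n).toLinearMap) (ψ := (Ideal.Quotient.mkₐ K (IX n K)).toLinearMap)
    partialParam_monomial_one fun m m' hmm' => by
      have hcard := DFunLike.congr_fun hmm' 0
      have hsum := DFunLike.congr_fun hmm' 1
      simp only [Finsupp.add_apply, Finsupp.single_eq_same, Finsupp.single_eq_of_ne zero_ne_one,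
        Finsupp.single_eq_of_ne one_ne_zero, add_zero, zero_add] at hcard hsum
      simp only [coe_basisMonomials, AlgHom.toLinearMap_apply, Ideal.Quotient.mkₐ_eq_mk, hclass,
        hcard, hsum]
  intro f hf
  exact Ideal.Quotient.eq_zero_iff_mem.1 (hker hf)

lemma IX_eq_ker_partialParam : IX n K = RingHom.ker (partialParam n K n) :=
  le_antisymm (hankelIdeal_le_ker_iff.2 isHankelZero_partialParam) ker_partialParam_le_IX

instance isPrime_IX : (IX n K).IsPrime := by
  rw [IX_eq_ker_partialParam]
  exact RingHom.ker_isPrime _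

lemma X_notMem_IX (i : Fin (n + 1)) : X i ∉ IX n K := by
  rw [IX_eq_ker_partialParam, RingHom.mem_ker, partialParam_X_of_le (Fin.is_le i)]
  exact mul_ne_zero (X_ne_zero 0) (pow_ne_zero _ (X_ne_zero 1))

lemma IX_mem_minimalPrimes_pathG : IX n K ∈ (hankelIdeal n K (pathG n)).minimalPrimes := by
  refine ⟨⟨isPrime_IX, hankelIdeal_mono le_top⟩, ?_⟩
  rintro P ⟨hP, hpath⟩ hle
  have : P.IsPrime := hP
  have hvar (i : ℕ) : varSeq (Ideal.Quotient.mk P) i ≠ 0 := fun hi =>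
    X_notMem_IX _ (hle (Ideal.Quotient.eq_zero_iff_mem.1 hi))
  exact hankelIdeal_le_iff.2 ((hankelIdeal_le_iff.1 hpath).top_of_pathG (hvar 0) (hvar 1))

lemma finite_hgenSet (G : SimpleGraph (Fin n)) : (hgenSet n K G).Finite :=
  (Set.finite_range fun e : Fin n × Fin n => hg n K e.1 e.2).subset
    fun _ ⟨i, j, _, _, hf⟩ => ⟨(i, j), hf.symm⟩

lemma ncard_hgenSet_pathG_le : (hgenSet n K (pathG n)).ncard ≤ n - 1 := by
  let consecutive (i : Fin (n - 1)) := hg n K ⟨i, by lia⟩ ⟨i + 1, by lia⟩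
  have hsub : hgenSet n K (pathG n) ⊆ consecutive '' Set.univ := by
    rintro f ⟨i, j, hij, hadj, rfl⟩
    simp only [pathG, SimpleGraph.fromRel_adj] at hadj
    exact ⟨⟨i, by lia⟩, Set.mem_univ _, congrArg (hg n K i) (Fin.ext (by lia))⟩
  calc (hgenSet n K (pathG n)).ncard ≤ (consecutive '' Set.univ).ncard := Set.ncard_le_ncard hsub
    _ ≤ (Set.univ : Set (Fin (n - 1))).ncard := Set.ncard_image_le
    _ = n - 1 := by rw [Set.ncard_univ, Nat.card_fin]

lemma height_IX_le : (IX n K).height ≤ (n - 1 : ℕ) :=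
  calc (IX n K).height ≤ (hgenSet n K (pathG n)).ncard :=
        Ideal.height_le_card_of_mem_minimalPrimes_span (finite_hgenSet _)
          IX_mem_minimalPrimes_pathG
    _ ≤ (n - 1 : ℕ) := mod_cast ncard_hgenSet_pathG_le

lemma height_IX : (IX n K).height = (n - 1 : ℕ) := by
  refine le_antisymm height_IX_le ?_
  cases n with
  | zero => simp
  | succ n =>
    rw [IX_eq_ker_partialParam]
    exact le_height_ker_partialParam le_rfl

lemma radical_hankelIdeal {G : SimpleGraph (Fin n)} (hG : cycleG n ≤ G) :
    (hankelIdeal n K G).radical = IX n K := by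
  refine le_antisymm (isPrime_IX.radical_le_iff.2 (hankelIdeal_mono le_top)) ?_
  rw [Ideal.radical_eq_sInf]
  refine le_sInf fun P ⟨hle, hP⟩ => ?_
  exact IX_le_of_hankelIdeal_cycleG_le ((hankelIdeal_mono hG).trans hle)

end Height

/-- For a connected labeled Hamiltonian graph `G` on `[n]` (i.e. `C_n ⊆ G`),
the only minimal prime of `I_G` is `I_X`; in particular `height I_G = n - 1`. -/
theorem stmt_2 (n : ℕ) (K : Type*) [Field K] (hn : 3 ≤ n)
    (G : SimpleGraph (Fin n)) (hG : G.Connected) (hcyc : cycleG n ≤ G) :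
    (hankelIdeal n K G).minimalPrimes = {IX n K} ∧
      ht (hankelIdeal n K G) = ((n - 1 : ℕ) : ℕ∞) := by
  have hmin : (hankelIdeal n K G).minimalPrimes = {IX n K} := by
    rw [← Ideal.radical_minimalPrimes, radical_hankelIdeal hcyc,
      Ideal.minimalPrimes_eq_subsingleton_self]
  refine ⟨hmin, ?_⟩
  rw [ht_eq_height, Ideal.height_eq_inf_minimalPrimes, hmin, iInf_singleton, height_IX]
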